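/- Let X be a pure d-dimensional ε-colorful expander with d > 1. Then for every 0 ≤ i < d the high order random walk on dimension i of X (taken lazy for i = 0, i.e., on G_0 with deg(v) self-loops added at every vertex v) is μ-rapidly mixing for μ = 1 − ε²/(2(d+1)²). -/

import Mathlib

/-!
Write `⟨f, g⟩ = ∑ deg(σ) f(σ) g(σ)` for the inner product in which the walk on `G_i` is
self-adjoint. If its quadratic form is bounded in absolute value by `μ` on functions orthogonal to
the constants, the walk contracts that space by `μ` (`contract`), and comparing the weighted norm
with the Euclidean one costs the factor `√(dmax / dmin)` (`rapidMixing_of_quad`). So it suffices to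
bound the quadratic form from both sides.

*Upper bound.* `G_i` is the edge-disjoint union, over the `(i+1)`-faces `ρ`, of complete graphs on
the `i + 2` facets of `ρ`, taken `deg ρ` times (`SC.adjG_eq`). Hence each expanding face of a
cochain `W` contributes at least `(i + 1) deg ρ` edges to the cut of `W`, while
`mdeg σ = (i + 1) (d - i) deg σ`; colorful expansion therefore says that `G_i` has conductance at
least `ε / (i + 2)` (`SC.conductance_bound`). Cheeger's inequality (`cheeger`) bounds the form by
`1 - ε² / (2 (i + 2)²)`, and `i + 2 ≤ d + 1`. For the lazy walk at `i = 0` the gap `ε² / 8` is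
halved to `ε² / 16`, which is still at least `ε² / (2 (d + 1)²)` because `d ≥ 2`.

*Lower bound.* A complete graph has smallest eigenvalue `-1`, so the form on `G_i` is at least
`-1 / (i + 1)`, that is at least `-1 / 2` for `i ≥ 1` (`SC.quad_lower`); the lazy form is
nonnegative. Conductance is at most `1`, so `ε ≤ d + 1` (`SC.eps_le`) and `μ ≥ 1 / 2`, which makes
both lower bounds sufficient.
-/

open Finset

open scoped Classical

noncomputable section

/-- A pure `d`-dimensional simplicial complex on a finite vertex set `V`: a collection of
finite subsets of `V` (the faces), containing the empty face, closed under taking subsets,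
in which every face is contained in a face of cardinality `d+1`. -/
structure SC (V : Type) [DecidableEq V] [Fintype V] (d : ℕ) where
  faces : Finset (Finset V)
  empty_mem : ∅ ∈ faces
  down_closed : ∀ σ ∈ faces, ∀ τ ⊆ σ, τ ∈ faces
  pure : ∀ σ ∈ faces, ∃ τ ∈ faces, σ ⊆ τ ∧ τ.card = d + 1

namespace SC

variable {V : Type} [DecidableEq V] [Fintype V] {d : ℕ}

/-- The faces of cardinality `k`, i.e. the set `X(k-1)` of `(k-1)`-dimensional faces. -/
def fc (X : SC V d) (k : ℕ) : Finset (Finset V) :=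
  X.faces.filter fun σ => σ.card = k

/-- The degree of a face: the number of top (`d`-dimensional) faces containing it. -/
def deg (X : SC V d) (σ : Finset V) : ℕ :=
  ((X.fc (d + 1)).filter fun τ => σ ⊆ τ).card

/-- The norm of a set `W` of faces of cardinality `k`:
`‖W‖ = (Σ_{σ∈W} deg σ) / (Σ_{τ∈X(k-1)} deg τ)`. -/
def norm (X : SC V d) (k : ℕ) (W : Finset (Finset V)) : ℝ :=
  (∑ σ ∈ (X.fc k).filter (· ∈ W), (X.deg σ : ℝ)) / ∑ σ ∈ X.fc k, (X.deg σ : ℝ)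

/-- `‖A_σ‖_σ`: the norm, computed inside the link of `σ`, of the localization to the link
of a set `A` of cardinality-`k` faces of `X`.  (The faces of the link of `σ` correspond
bijectively to the faces `ρ ⊇ σ` of `X` via `τ ↦ σ ∪ τ`, and this correspondence
preserves degrees.) -/
def linkNorm (X : SC V d) (σ : Finset V) (k : ℕ) (A : Finset (Finset V)) : ℝ :=
  (∑ ρ ∈ (X.fc k).filter (fun ρ => σ ⊆ ρ ∧ ρ ∈ A), (X.deg ρ : ℝ)) /
    ∑ ρ ∈ (X.fc k).filter (fun ρ => σ ⊆ ρ), (X.deg ρ : ℝ)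

/-- For a set `S` of vertices, the norm `‖·‖_σ` in the link of `σ` of the set of
`(m-1)`-dimensional faces of the link all of whose vertices lie in `S`.
For `m = 1` this is `‖S‖_σ` and for `m = 2` it is `‖E(S)‖_σ`. -/
def linkSubsetNorm (X : SC V d) (σ : Finset V) (m : ℕ) (S : Finset V) : ℝ :=
  (∑ ρ ∈ (X.fc (σ.card + m)).filter (fun ρ => σ ⊆ ρ ∧ ρ \ σ ⊆ S), (X.deg ρ : ℝ)) /
    ∑ ρ ∈ (X.fc (σ.card + m)).filter (fun ρ => σ ⊆ ρ), (X.deg ρ : ℝ)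

/-- `X` is an `α`-skeleton expander: for every face `σ ∈ X` (including `σ = ∅`) and every
set `S` of vertices of the link of `σ`, `‖E(S)‖_σ ≤ ‖S‖_σ (‖S‖_σ + α)`. -/
def IsSkeletonExpander (X : SC V d) (α : ℝ) : Prop :=
  ∀ σ ∈ X.faces, ∀ S : Finset V,
    X.linkSubsetNorm σ 2 S ≤ X.linkSubsetNorm σ 1 S * (X.linkSubsetNorm σ 1 S + α)

/-- The expanding faces `ψ(W)` of a set `W` of cardinality-`k` faces: the
cardinality-`(k+1)` faces containing both a cardinality-`k` face in `W` and a
cardinality-`k` face not in `W`. -/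
def psi (X : SC V d) (k : ℕ) (W : Finset (Finset V)) : Finset (Finset V) :=
  (X.fc (k + 1)).filter fun τ =>
    (∃ σ ⊆ τ, σ.card = k ∧ σ ∈ W) ∧ ∃ σ ⊆ τ, σ.card = k ∧ σ ∉ W

/-- `X` is an `ε`-colorful expander: for every `0 ≤ i < d` and every `i`-cochain `W` with
`0 < ‖W‖ ≤ 1/2`, one has `‖ψ(W)‖/‖W‖ ≥ ε`. -/
def IsColorfulExpander (X : SC V d) (ε : ℝ) : Prop :=
  ∀ i : ℕ, i < d → ∀ W ⊆ X.fc (i + 1),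
    0 < X.norm (i + 1) W → X.norm (i + 1) W ≤ 1 / 2 →
    ε ≤ X.norm (i + 2) (X.psi (i + 1) W) / X.norm (i + 1) W

/-- The container `Γ(W)` of a set `W` of cardinality-`k` faces: the cardinality-`(k+1)`
faces containing at least one cardinality-`k` face of `W`. -/
def container (X : SC V d) (k : ℕ) (W : Finset (Finset V)) : Finset (Finset V) :=
  (X.fc (k + 1)).filter fun τ => ∃ σ ⊆ τ, σ.card = k ∧ σ ∈ W

/-- Fat faces: for an `i`-cochain `W` and fatness constant `η`, `X.fat i W η m` is the
set `S^{i-m}(W)` of fat faces of dimension `i - m` (so of cardinality `i + 1 - m`);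
`m = i + 1` gives `S^{-1}(W)`. -/
def fat (X : SC V d) (i : ℕ) (W : Finset (Finset V)) (η : ℝ) : ℕ → Finset (Finset V)
  | 0 => (X.fc (i + 1)).filter (· ∈ W)
  | m + 1 => (X.fc (i - m)).filter fun σ =>
      η ^ 2 ^ m ≤ X.linkNorm σ (i - m + 1) (fat X i W η m)

/-- Full faces: `X.full i W η j` is `F^j(W)`, the set of cardinality-`(j+1)` faces all of
whose cardinality-`j` subsets lie in `S^{j-1}(W) = X.fat i W η (i + 1 - j)`. -/
def full (X : SC V d) (i : ℕ) (W : Finset (Finset V)) (η : ℝ) (j : ℕ) :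
    Finset (Finset V) :=
  (X.fc (j + 1)).filter fun τ => ∀ σ ⊆ τ, σ.card = j → σ ∈ X.fat i W η (i + 1 - j)

/-- `X.prNI ka kb A B` is the probability `Pr[P_{ka-1} ∈ A ∧ P_{kb-1} ∉ B]` for the chain
`P_d ⊃ P_{d-1} ⊃ ⋯` in which `P_d` is a uniformly random top face and each `P_{l-1}` is
obtained from `P_l` by deleting a uniformly random vertex.  (Given `P_{ka-1} = σ`,
the face `P_{kb-1}` is a uniformly random cardinality-`kb` subset of `σ`, and
`Pr[P_{ka-1} = σ] = deg σ / Σ_{τ ∈ X(ka-1)} deg τ`.) -/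
def prNI (X : SC V d) (ka kb : ℕ) (A B : Finset (Finset V)) : ℝ :=
  (∑ σ ∈ (X.fc ka).filter (· ∈ A),
      (X.deg σ : ℝ) * (((σ.powersetCard kb).filter (· ∉ B)).card : ℝ)) /
    ((ka.choose kb : ℝ) * ∑ σ ∈ X.fc ka, (X.deg σ : ℝ))

end SC

/-! ### Multigraphs, given by symmetric adjacency-count matrices -/

/-- Degree of a vertex in the multigraph with adjacency counts `A`. -/
def mdeg {U : Type} [Fintype U] (A : U → U → ℕ) (v : U) : ℕ := ∑ u, A v u

/-- The transition matrix `DA` of the random walk on the multigraph `A`. -/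
def transition {U : Type} [Fintype U] (A : U → U → ℕ) : Matrix U U ℝ :=
  Matrix.of fun u v => (A u v : ℝ) / (mdeg A u : ℝ)

/-- The normalized adjacency matrix `Ã = D^(1/2) A D^(1/2)`. -/
def normAdj {U : Type} [Fintype U] (A : U → U → ℕ) : Matrix U U ℝ :=
  Matrix.of fun u v => (A u v : ℝ) / (Real.sqrt (mdeg A u) * Real.sqrt (mdeg A v))

/-- The stationary distribution `π(v) = deg v / Σ_u deg u`. -/
def statDist {U : Type} [Fintype U] (A : U → U → ℕ) (v : U) : ℝ :=
  (mdeg A v : ℝ) / ∑ u, (mdeg A u : ℝ)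

/-- Maximum degree. -/
def dmaxDeg {U : Type} [Fintype U] (A : U → U → ℕ) : ℕ := ⨆ v, mdeg A v

/-- Minimum degree. -/
def dminDeg {U : Type} [Fintype U] (A : U → U → ℕ) : ℕ := ⨅ v, mdeg A v

/-- The random walk on the multigraph `A` is `μ`-rapidly mixing: for every initial
probability distribution `π0` and every `t`, `‖π0 (DA)^t − π‖₂ ≤ √(dmax/dmin) μ^t`. -/
def IsRapidMixing {U : Type} [Fintype U] [DecidableEq U] (A : U → U → ℕ) (μ : ℝ) : Prop :=
  ∀ π0 : U → ℝ, (∀ v, 0 ≤ π0 v) → ∑ v, π0 v = 1 → ∀ t : ℕ,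
    Real.sqrt (∑ v, (Matrix.vecMul π0 (transition A ^ t) v - statDist A v) ^ 2) ≤
      Real.sqrt ((dmaxDeg A : ℝ) / (dminDeg A : ℝ)) * μ ^ t

/-- The lazy version of a multigraph: add `deg v` self-loops at every vertex `v`. -/
def lazy {U : Type} [Fintype U] [DecidableEq U] (A : U → U → ℕ) : U → U → ℕ :=
  fun u v => A u v + if u = v then mdeg A u else 0

/-- `|E(S, S̄)|`: the number of edges with one endpoint in `S` and one in its complement. -/
def cutEdges {U : Type} [Fintype U] [DecidableEq U] (A : U → U → ℕ) (S : Finset U) : ℝ :=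
  ∑ u ∈ S, ∑ v ∈ Sᶜ, (A u v : ℝ)

/-- `vol S = Σ_{v ∈ S} deg v`. -/
def vol {U : Type} [Fintype U] (A : U → U → ℕ) (S : Finset U) : ℝ :=
  ∑ v ∈ S, (mdeg A v : ℝ)

/-- The conductance `Φ(G) = min { |E(S,S̄)|/vol S : ∅ ≠ S, vol S ≤ vol V / 2 }`. -/
def conductance {U : Type} [Fintype U] [DecidableEq U] (A : U → U → ℕ) : ℝ :=
  sInf { x : ℝ | ∃ S : Finset U, S.Nonempty ∧ vol A S ≤ vol A Finset.univ / 2 ∧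
    x = cutEdges A S / vol A S }

/-- `|E(T)|`: the number of edges with both endpoints in `T`. -/
def edgesWithin {U : Type} [Fintype U] (A : U → U → ℕ) (T : Finset U) : ℝ :=
  ((∑ u ∈ T, ∑ v ∈ T, (A u v : ℝ)) + ∑ v ∈ T, (A v v : ℝ)) / 2

/-- The bipartiteness ratio
`β(G) = min {(|E(S,S̄)| + 2(|E(S1)| + |E(S2)|))/vol S : S = S1 ⊔ S2 ≠ ∅}`. -/
def bipRatio {U : Type} [Fintype U] [DecidableEq U] (A : U → U → ℕ) : ℝ :=
  sInf { x : ℝ | ∃ S1 S2 : Finset U, (S1 ∪ S2).Nonempty ∧ Disjoint S1 S2 ∧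
    x = (cutEdges A (S1 ∪ S2) + 2 * (edgesWithin A S1 + edgesWithin A S2)) /
      vol A (S1 ∪ S2) }

/-- The adjacency counts of the `i`-graph `G_i(X)`: its vertices are the `i`-faces of `X`
(cardinality `i+1`), and two neighboring `i`-faces `σ ∼ τ` (i.e. `σ ∪ τ ∈ X(i+1)`) are
joined by `deg (σ ∪ τ)` parallel edges. -/
def SC.adjG {V : Type} [DecidableEq V] [Fintype V] {d : ℕ} (X : SC V d) (i : ℕ) :
    {σ // σ ∈ X.fc (i + 1)} → {σ // σ ∈ X.fc (i + 1)} → ℕ :=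
  fun σ τ => if σ.1 ∪ τ.1 ∈ X.fc (i + 2) then X.deg (σ.1 ∪ τ.1) else 0

end

/-! ### Cheeger's inequality -/

section Cheeger

variable {U : Type} [Fintype U]

lemma sum_adj_left (A : U → U → ℕ) (g : U → ℝ) :
    ∑ u, ∑ v, (A u v : ℝ) * g u = ∑ u, (mdeg A u : ℝ) * g u := by
  refine Finset.sum_congr rfl fun u _ => ?_
  rw [← Finset.sum_mul, mdeg]; push_cast; rfl

lemma sum_adj_right (A : U → U → ℕ) (hA : ∀ u v, A u v = A v u) (g : U → ℝ) :
    ∑ u, ∑ v, (A u v : ℝ) * g v = ∑ u, (mdeg A u : ℝ) * g u := by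
  rw [Finset.sum_comm, ← sum_adj_left]
  simp only [hA]

lemma sum_adj_sub_sq (A : U → U → ℕ) (hA : ∀ u v, A u v = A v u) (f : U → ℝ) :
    ∑ u, ∑ v, (A u v : ℝ) * (f u - f v) ^ 2 =
      2 * ∑ u, (mdeg A u : ℝ) * f u ^ 2 - 2 * ∑ u, ∑ v, (A u v : ℝ) * (f u * f v) := by
  have e : ∀ u v, (A u v : ℝ) * (f u - f v) ^ 2 =
      (A u v : ℝ) * f u ^ 2 + (A u v : ℝ) * f v ^ 2 - 2 * ((A u v : ℝ) * (f u * f v)) := by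
    intros; ring
  simp only [e, Finset.sum_sub_distrib, Finset.sum_add_distrib, ← Finset.mul_sum]
  rw [sum_adj_left A (fun u => f u ^ 2), sum_adj_right A hA (fun u => f u ^ 2)]
  ring

lemma sum_adj_add_sq (A : U → U → ℕ) (hA : ∀ u v, A u v = A v u) (f : U → ℝ) :
    ∑ u, ∑ v, (A u v : ℝ) * (f u + f v) ^ 2 =
      2 * ∑ u, (mdeg A u : ℝ) * f u ^ 2 + 2 * ∑ u, ∑ v, (A u v : ℝ) * (f u * f v) := by
  have e : ∀ u v, (A u v : ℝ) * (f u + f v) ^ 2 =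
      (A u v : ℝ) * f u ^ 2 + (A u v : ℝ) * f v ^ 2 + 2 * ((A u v : ℝ) * (f u * f v)) := by
    intros; ring
  simp only [e, Finset.sum_add_distrib, ← Finset.mul_sum]
  rw [sum_adj_left A (fun u => f u ^ 2), sum_adj_right A hA (fun u => f u ^ 2)]
  ring

variable [DecidableEq U]

/-- Discrete co-area inequality, by peeling off the level sets of `h` one at a time. -/
lemma coarea (A : U → U → ℕ) (hA : ∀ u v, A u v = A v u) (Φ : ℝ)
    (hΦ : ∀ S : Finset U, 2 * vol A S ≤ vol A univ → Φ * vol A S ≤ cutEdges A S) :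
    ∀ (n : ℕ) (h : U → ℝ), (∀ u, 0 ≤ h u) → (univ.filter fun u => 0 < h u).card = n →
      2 * vol A (univ.filter fun u => 0 < h u) ≤ vol A univ →
      2 * Φ * ∑ u, (mdeg A u : ℝ) * h u ≤ ∑ u, ∑ v, (A u v : ℝ) * |h u - h v| := by
  intro n
  induction n using Nat.strong_induction_on with
  | _ n ih =>
  intro h h0 hn hvol
  set S : Finset U := univ.filter fun u => 0 < h u with hS
  by_cases hne : S.Nonempty
  · obtain ⟨m, hmS, hm⟩ := S.exists_min_image h hne
    have hmpos : 0 < h m := by simpa [hS] using hmS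
    set c : U → ℝ := fun u => if u ∈ S then 1 else 0 with hc
    set h' : U → ℝ := fun u => h u - h m * c u with hh'
    have hnot : ∀ u, u ∉ S → h u = 0 := fun u hu =>
      le_antisymm (by simpa [hS] using hu) (h0 u)
    have h'0 : ∀ u, 0 ≤ h' u := by
      intro u
      by_cases hu : u ∈ S
      · simpa [hh', hc, hu] using hm u hu
      · simp [hh', hc, hu, h0 u]
    have hsub : (univ.filter fun u => 0 < h' u) ⊂ S := by
      refine (Finset.ssubset_iff_of_subset ?_).2 ⟨m, hmS, ?_⟩
      · intro u hu
        by_contra hu'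
        simp [hh', hc, hu', hnot u hu'] at hu
      · simp [hh', hc, hmS]
    have hvol' : vol A (univ.filter fun u => 0 < h' u) ≤ vol A S :=
      Finset.sum_le_sum_of_subset_of_nonneg hsub.1 (fun _ _ _ => by positivity)
    have key := ih _ (hn ▸ Finset.card_lt_card hsub) h' h'0 rfl (by linarith)
    have hcut : ∑ u, ∑ v, (A u v : ℝ) * |c u - c v| = 2 * cutEdges A S := by
      have e : ∀ u v, (A u v : ℝ) * |c u - c v| =
          (if u ∈ S then (if v ∈ Sᶜ then (A u v : ℝ) else 0) else 0) +
          (if v ∈ S then (if u ∈ Sᶜ then (A v u : ℝ) else 0) else 0) := by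
        intro u v
        rw [hA v u]
        by_cases hu : u ∈ S <;> by_cases hv : v ∈ S <;> simp [hc, hu, hv]
      have e1 : ∑ u, ∑ v, (if u ∈ S then (if v ∈ Sᶜ then (A u v : ℝ) else 0) else 0)
          = cutEdges A S := by
        have e2 : ∀ u, ∑ v, (if u ∈ S then (if v ∈ Sᶜ then (A u v : ℝ) else 0) else 0) =
            if u ∈ S then ∑ v ∈ Sᶜ, (A u v : ℝ) else 0 := by
          intro u
          split_ifs
          · rw [Finset.sum_ite_mem, Finset.univ_inter]
          · simp
        simp only [e2]
        rw [Finset.sum_ite_mem, Finset.univ_inter, cutEdges]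
      simp only [e, Finset.sum_add_distrib]
      rw [e1, Finset.sum_comm (f := fun u v =>
        (if v ∈ S then (if u ∈ Sᶜ then (A v u : ℝ) else 0) else 0)), e1]
      ring
    have hvolc : ∑ u, (mdeg A u : ℝ) * c u = vol A S := by
      simp [hc, vol, Finset.sum_ite_mem]
    have hsplit : ∀ u v, |h u - h v| = |h' u - h' v| + h m * |c u - c v| := by
      intro u v
      by_cases hu : u ∈ S <;> by_cases hv : v ∈ S <;> simp only [hh', hc, hu, hv, if_true, if_false]
      · simp
      · rw [hnot v hv, abs_of_nonneg (by linarith [h0 u]),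
          abs_of_nonneg (by linarith [hm u hu])]; simp
      · rw [hnot u hu, abs_of_nonpos (by linarith [h0 v]),
          abs_of_nonpos (by linarith [hm v hv])]; simp
      · simp
    have hL : ∑ u, (mdeg A u : ℝ) * h u = ∑ u, (mdeg A u : ℝ) * h' u + h m * vol A S := by
      rw [← hvolc, Finset.mul_sum, ← Finset.sum_add_distrib]
      refine Finset.sum_congr rfl fun u _ => ?_
      simp only [hh']; ring
    have hR : ∑ u, ∑ v, (A u v : ℝ) * |h u - h v| =
        ∑ u, ∑ v, (A u v : ℝ) * |h' u - h' v| + h m * (2 * cutEdges A S) := by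
      rw [← hcut, Finset.mul_sum, ← Finset.sum_add_distrib]
      refine Finset.sum_congr rfl fun u _ => ?_
      rw [Finset.mul_sum, ← Finset.sum_add_distrib]
      refine Finset.sum_congr rfl fun v _ => ?_
      rw [hsplit]; ring
    rw [hL, hR]
    have := mul_le_mul_of_nonneg_left (hΦ S hvol) hmpos.le
    nlinarith
  · have hz : ∀ u, h u = 0 := fun u => le_antisymm
      (by
        have : u ∉ S := fun hu => hne ⟨u, hu⟩
        simpa [hS] using this) (h0 u)
    simp [hz]

/-- Cheeger's bound for a nonnegative function supported on at most half of the volume: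
the co-area inequality for `g ^ 2`, followed by Cauchy–Schwarz. -/
lemma cheeger_half (A : U → U → ℕ) (hA : ∀ u v, A u v = A v u) (Φ : ℝ) (hΦ0 : 0 ≤ Φ)
    (hΦ : ∀ S : Finset U, 2 * vol A S ≤ vol A univ → Φ * vol A S ≤ cutEdges A S)
    (g : U → ℝ) (g0 : ∀ u, 0 ≤ g u)
    (hvol : 2 * vol A (univ.filter fun u => 0 < g u) ≤ vol A univ) :
    Φ ^ 2 * ∑ u, (mdeg A u : ℝ) * g u ^ 2 ≤ ∑ u, ∑ v, (A u v : ℝ) * (g u - g v) ^ 2 := by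
  set N := ∑ u, (mdeg A u : ℝ) * g u ^ 2 with hN
  set E := ∑ u, ∑ v, (A u v : ℝ) * (g u - g v) ^ 2 with hE
  set F := ∑ u, ∑ v, (A u v : ℝ) * (g u + g v) ^ 2 with hF
  set B := ∑ u, ∑ v, (A u v : ℝ) * |g u ^ 2 - g v ^ 2| with hB
  have hN0 : 0 ≤ N := Finset.sum_nonneg fun _ _ => by positivity
  have hE0 : 0 ≤ E := Finset.sum_nonneg fun _ _ => Finset.sum_nonneg fun _ _ => by positivity
  have h1 : 2 * Φ * N ≤ B := by
    refine coarea A hA Φ hΦ _ (fun u => g u ^ 2) (fun u => sq_nonneg _) rfl ?_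
    have : (univ.filter fun u => 0 < g u ^ 2) = univ.filter fun u => 0 < g u := by
      ext u
      simp only [mem_filter, mem_univ, true_and]
      exact ⟨fun h => lt_of_le_of_ne (g0 u) (by rintro h'; simp [← h'] at h), fun h => by positivity⟩
    rw [this]; exact hvol
  have hEF : E + F = 4 * N := by
    rw [hE, hF, sum_adj_sub_sq A hA, sum_adj_add_sq A hA]; ring
  have h2 : B ^ 2 ≤ E * F := by
    have := Finset.sum_mul_sq_le_sq_mul_sq (univ : Finset (U × U))
      (fun p => Real.sqrt (A p.1 p.2) * |g p.1 - g p.2|)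
      (fun p => Real.sqrt (A p.1 p.2) * |g p.1 + g p.2|)
    simp only [mul_pow, sq_abs, Real.sq_sqrt (Nat.cast_nonneg _),
      Fintype.sum_prod_type] at this
    suffices hB' : B = ∑ u, ∑ v, Real.sqrt (A u v) * |g u - g v| *
        (Real.sqrt (A u v) * |g u + g v|) by rw [hB']; exact this
    refine Finset.sum_congr rfl fun u _ => Finset.sum_congr rfl fun v _ => ?_
    have : Real.sqrt (A u v) * Real.sqrt (A u v) = A u v := Real.mul_self_sqrt (by positivity)
    rw [mul_mul_mul_comm, this, ← abs_mul]
    ring_nf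
  have h3 : (2 * Φ * N) ^ 2 ≤ B ^ 2 := pow_le_pow_left₀ (by positivity) h1 2
  rcases hN0.eq_or_lt with hz | hpos
  · rw [← hz]; simpa using hE0
  · by_contra hcon
    push Not at hcon
    nlinarith

/-- Existence of a median for the degree measure. -/
lemma exists_median (A : U → U → ℕ) [Nonempty U] (f : U → ℝ) : ∃ c : ℝ,
    2 * vol A (univ.filter fun u => c < f u) ≤ vol A univ ∧
    2 * vol A (univ.filter fun u => f u < c) ≤ vol A univ := by
  -- The median is the least value above which lies at most half of the volume.
  set T : Finset U := univ.filter fun w =>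
    2 * vol A (univ.filter fun u => f w < f u) ≤ vol A univ with hT
  have hvol0 : 0 ≤ vol A univ := Finset.sum_nonneg fun _ _ => by positivity
  have hTne : T.Nonempty := by
    obtain ⟨w, -, hw⟩ := (univ : Finset U).exists_max_image f univ_nonempty
    refine ⟨w, ?_⟩
    have : (univ.filter fun u => f w < f u) = ∅ := by
      ext u; simpa using hw u (mem_univ _)
    simp only [hT, mem_filter, mem_univ, true_and, this]
    simpa [vol] using hvol0
  obtain ⟨m, hmT, hm⟩ := T.exists_min_image f hTne
  refine ⟨f m, by simpa [hT] using hmT, ?_⟩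
  by_cases hne : (univ.filter fun u => f u < f m).Nonempty
  · obtain ⟨w, hw, hwmax⟩ := Finset.exists_max_image _ f hne
    simp only [mem_filter, mem_univ, true_and] at hw hwmax
    have hwT : w ∉ T := fun h => absurd (hm w h) (not_le.2 hw)
    have hw2 : vol A univ < 2 * vol A (univ.filter fun u => f w < f u) := by
      simpa [hT] using hwT
    have hdisj : vol A (univ.filter fun u => f w < f u) +
        vol A (univ.filter fun u => f u < f m) ≤ vol A univ := by
      unfold vol
      rw [← Finset.sum_union]
      · exact Finset.sum_le_sum_of_subset_of_nonneg (subset_univ _) fun _ _ _ => by positivity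
      · rw [Finset.disjoint_left]
        intro u hu hu'
        simp only [mem_filter, mem_univ, true_and] at hu hu'
        exact absurd (hwmax u hu') (not_le.2 hu)
    linarith
  · rw [Finset.not_nonempty_iff_eq_empty.1 hne]
    simpa [vol] using hvol0

/-- Cheeger's inequality `λ₂ ≤ 1 - Φ ^ 2 / 2`, as a bound on the Dirichlet form. -/
lemma cheeger (A : U → U → ℕ) (hA : ∀ u v, A u v = A v u) [Nonempty U] (Φ : ℝ) (hΦ0 : 0 ≤ Φ)
    (hΦ : ∀ S : Finset U, 2 * vol A S ≤ vol A univ → Φ * vol A S ≤ cutEdges A S)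
    (f : U → ℝ) (hf : ∑ u, (mdeg A u : ℝ) * f u = 0) :
    ∑ u, ∑ v, (A u v : ℝ) * (f u * f v) ≤ (1 - Φ ^ 2 / 2) * ∑ u, (mdeg A u : ℝ) * f u ^ 2 := by
  obtain ⟨c, hc1, hc2⟩ := exists_median A f
  have hp := cheeger_half A hA Φ hΦ0 hΦ (fun u => max (f u - c) 0) (fun u => le_max_right _ _)
    (by simpa using hc1)
  have hq := cheeger_half A hA Φ hΦ0 hΦ (fun u => max (c - f u) 0) (fun u => le_max_right _ _)
    (by simpa using hc2)
  have hN : ∑ u, (mdeg A u : ℝ) * f u ^ 2 ≤ ∑ u, (mdeg A u : ℝ) * (max (f u - c) 0) ^ 2 +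
      ∑ u, (mdeg A u : ℝ) * (max (c - f u) 0) ^ 2 := by
    have e : ∀ u, (mdeg A u : ℝ) * (max (f u - c) 0) ^ 2 +
        (mdeg A u : ℝ) * (max (c - f u) 0) ^ 2 =
        (mdeg A u : ℝ) * f u ^ 2 - 2 * c * ((mdeg A u : ℝ) * f u) + (mdeg A u : ℝ) * c ^ 2 := by
      intro u
      rcases le_total (f u) c with h | h
      · rw [max_eq_right (by linarith), max_eq_left (by linarith)]; ring
      · rw [max_eq_left (by linarith), max_eq_right (by linarith)]; ring
    rw [← Finset.sum_add_distrib]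
    simp only [e]
    rw [Finset.sum_add_distrib, Finset.sum_sub_distrib, ← Finset.mul_sum, hf]
    have : 0 ≤ ∑ u, (mdeg A u : ℝ) * c ^ 2 := Finset.sum_nonneg fun _ _ => by positivity
    linarith
  have hE : ∑ u, ∑ v, (A u v : ℝ) * (max (f u - c) 0 - max (f v - c) 0) ^ 2 +
      ∑ u, ∑ v, (A u v : ℝ) * (max (c - f u) 0 - max (c - f v) 0) ^ 2 ≤
      ∑ u, ∑ v, (A u v : ℝ) * (f u - f v) ^ 2 := by
    simp only [← Finset.sum_add_distrib, ← mul_add]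
    refine Finset.sum_le_sum fun u _ => Finset.sum_le_sum fun v _ =>
      mul_le_mul_of_nonneg_left ?_ (by positivity)
    rcases le_total (f u) c with h | h <;> rcases le_total (f v) c with h' | h' <;>
    simp only [max_eq_right (sub_nonpos.2 h), max_eq_right (sub_nonpos.2 h'),
      max_eq_left (sub_nonneg.2 h), max_eq_left (sub_nonneg.2 h')] <;> nlinarith
  have := mul_le_mul_of_nonneg_left hN (sq_nonneg Φ)
  rw [sum_adj_sub_sq A hA f] at hE
  linarith

end Cheeger

/-! ### From a bound on the quadratic form to mixing -/

section Mixing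

variable {U : Type} [Fintype U]

/-- A self-adjoint operator whose quadratic form is bounded by `μ` on the invariant subspace of
functions of mean zero contracts it by `μ`: polarize with `g = μ⁻¹ T f`. -/
lemma contract (A : U → U → ℕ) (hA : ∀ u v, A u v = A v u)
    (μ : ℝ) (hμ : 0 < μ)
    (hq : ∀ f : U → ℝ, ∑ u, (mdeg A u : ℝ) * f u = 0 →
      |∑ u, ∑ v, (A u v : ℝ) * (f u * f v)| ≤ μ * ∑ u, (mdeg A u : ℝ) * f u ^ 2)
    (f T : U → ℝ) (hT : ∀ v, (mdeg A v : ℝ) * T v = ∑ u, (A u v : ℝ) * f u)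
    (hf : ∑ u, (mdeg A u : ℝ) * f u = 0) (hTf : ∑ u, (mdeg A u : ℝ) * T u = 0) :
    ∑ u, (mdeg A u : ℝ) * T u ^ 2 ≤ μ ^ 2 * ∑ u, (mdeg A u : ℝ) * f u ^ 2 := by
  set N := ∑ u, (mdeg A u : ℝ) * f u ^ 2
  set M := ∑ u, (mdeg A u : ℝ) * T u ^ 2 with hM
  have hcross : ∑ u, ∑ v, (A u v : ℝ) * (f u * T v) = M := by
    rw [Finset.sum_comm, hM]
    refine Finset.sum_congr rfl fun v _ => ?_
    rw [pow_two, ← mul_assoc, hT, Finset.sum_mul]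
    refine Finset.sum_congr rfl fun u _ => by ring
  have hcross' : ∑ u, ∑ v, (A u v : ℝ) * (T u * f v) = M := by
    rw [← hcross, Finset.sum_comm]
    refine Finset.sum_congr rfl fun u _ => Finset.sum_congr rfl fun v _ => ?_
    rw [hA]; ring
  set Qf := ∑ u, ∑ v, (A u v : ℝ) * (f u * f v)
  set QT := ∑ u, ∑ v, (A u v : ℝ) * (T u * T v)
  set C := ∑ u, (mdeg A u : ℝ) * (f u * T u)
  have hQ : ∀ s : ℝ, |μ ^ 2 * Qf + 2 * (s * μ) * M + s ^ 2 * QT| ≤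
      μ * (μ ^ 2 * N + 2 * (s * μ) * C + s ^ 2 * M) := by
    intro s
    have h := hq (fun u => μ * f u + s * T u) (by
      have e : ∀ u, (mdeg A u : ℝ) * (μ * f u + s * T u) =
        μ * ((mdeg A u : ℝ) * f u) + s * ((mdeg A u : ℝ) * T u) := by intros; ring
      simp only [e, Finset.sum_add_distrib, ← Finset.mul_sum, hf, hTf]; simp)
    have e1 : ∑ u, ∑ v, (A u v : ℝ) * ((μ * f u + s * T u) * (μ * f v + s * T v)) =
        μ ^ 2 * Qf + 2 * (s * μ) * M + s ^ 2 * QT := by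
      have e : ∀ u v, (A u v : ℝ) * ((μ * f u + s * T u) * (μ * f v + s * T v)) =
        μ ^ 2 * ((A u v : ℝ) * (f u * f v)) + (s * μ) * ((A u v : ℝ) * (f u * T v)) +
        (s * μ) * ((A u v : ℝ) * (T u * f v)) + s ^ 2 * ((A u v : ℝ) * (T u * T v)) := by
        intros; ring
      simp only [e, Finset.sum_add_distrib, ← Finset.mul_sum]
      rw [hcross, hcross']; ring
    have e2 : ∑ u, (mdeg A u : ℝ) * (μ * f u + s * T u) ^ 2 =
        μ ^ 2 * N + 2 * (s * μ) * C + s ^ 2 * M := by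
      have e : ∀ u, (mdeg A u : ℝ) * (μ * f u + s * T u) ^ 2 =
        μ ^ 2 * ((mdeg A u : ℝ) * f u ^ 2) + 2 * (s * μ) * ((mdeg A u : ℝ) * (f u * T u)) +
        s ^ 2 * ((mdeg A u : ℝ) * T u ^ 2) := by intros; ring
      simp only [e, Finset.sum_add_distrib, ← Finset.mul_sum]; rfl
    rw [e1, e2] at h; exact h
  have h1 := (abs_le.1 (hQ 1)).2
  have h2 := (abs_le.1 (hQ (-1))).1
  have h3 : μ * M ≤ μ * (μ ^ 2 * N) := by nlinarith
  exact le_of_mul_le_mul_left h3 hμ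

lemma vecMul_transition (A : U → U → ℕ) (x : U → ℝ) (v : U) :
    Matrix.vecMul x (transition A) v = ∑ u, (A u v : ℝ) * (x u / mdeg A u) := by
  simp only [Matrix.vecMul, dotProduct, transition, Matrix.of_apply]
  exact Finset.sum_congr rfl fun u _ => by ring

variable [DecidableEq U]

/-- Decay of mean-zero signed measures in the norm weighted by inverse degrees. -/
lemma decay (A : U → U → ℕ) (hA : ∀ u v, A u v = A v u) (hpos : ∀ v, 0 < mdeg A v)
    (μ : ℝ) (hμ : 0 < μ)
    (hq : ∀ f : U → ℝ, ∑ u, (mdeg A u : ℝ) * f u = 0 →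
      |∑ u, ∑ v, (A u v : ℝ) * (f u * f v)| ≤ μ * ∑ u, (mdeg A u : ℝ) * f u ^ 2)
    (x : U → ℝ) (hx : ∑ u, x u = 0) (t : ℕ) :
    ∑ v, Matrix.vecMul x (transition A ^ t) v = 0 ∧
    ∑ v, (Matrix.vecMul x (transition A ^ t) v) ^ 2 / mdeg A v ≤
      (μ ^ t) ^ 2 * ∑ v, x v ^ 2 / mdeg A v := by
  have hne : ∀ v, (mdeg A v : ℝ) ≠ 0 := fun v => by exact_mod_cast (hpos v).ne'
  induction t with
  | zero => simpa using hx
  | succ t ih =>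
    obtain ⟨ih0, ih1⟩ := ih
    rw [pow_succ (transition A), ← Matrix.vecMul_vecMul]
    set y := Matrix.vecMul x (transition A ^ t)
    have hsum : ∑ v, Matrix.vecMul y (transition A) v = 0 := by
      simp only [vecMul_transition]
      rw [Finset.sum_comm, sum_adj_left A (fun u => y u / mdeg A u), ← ih0]
      exact Finset.sum_congr rfl fun u _ => mul_div_cancel₀ _ (hne u)
    refine ⟨hsum, ?_⟩
    have key := contract A hA μ hμ hq (fun u => y u / mdeg A u)
      (fun v => Matrix.vecMul y (transition A) v / mdeg A v)
      (fun v => by rw [mul_div_cancel₀ _ (hne v), vecMul_transition])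
      (by rw [← ih0]; exact Finset.sum_congr rfl fun u _ => mul_div_cancel₀ _ (hne u))
      (by rw [← hsum]; exact Finset.sum_congr rfl fun u _ => mul_div_cancel₀ _ (hne u))
    have e : ∀ (z : U → ℝ), ∑ v, (mdeg A v : ℝ) * (z v / mdeg A v) ^ 2 =
        ∑ v, z v ^ 2 / mdeg A v := by
      intro z
      refine Finset.sum_congr rfl fun v _ => ?_
      have := hne v
      field_simp
    rw [e, e] at key
    calc _ ≤ _ := key
      _ ≤ μ ^ 2 * ((μ ^ t) ^ 2 * ∑ v, x v ^ 2 / mdeg A v) :=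
        mul_le_mul_of_nonneg_left ih1 (by positivity)
      _ = _ := by ring

lemma statDist_step (A : U → U → ℕ) (hA : ∀ u v, A u v = A v u) (hpos : ∀ v, 0 < mdeg A v)
    (t : ℕ) : Matrix.vecMul (statDist A) (transition A ^ t) = statDist A := by
  induction t with
  | zero => simp
  | succ t ih =>
    rw [pow_succ, ← Matrix.vecMul_vecMul, ih]
    ext v
    rw [vecMul_transition]
    have : ∀ u, (A u v : ℝ) * (statDist A u / mdeg A u) =
        (A v u : ℝ) * (1 / ∑ w, (mdeg A w : ℝ)) := by
      intro u
      have : (mdeg A u : ℝ) ≠ 0 := by exact_mod_cast (hpos u).ne'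
      rw [hA u v, statDist, div_div, mul_comm (∑ w, _), ← div_div, div_self this]
    simp only [this]
    rw [← Finset.sum_mul, statDist, mdeg]
    push_cast; ring

/-- If all nontrivial eigenvalues of the walk are at most `μ` in absolute value, the walk mixes
at rate `μ`. -/
lemma rapidMixing_of_quad (A : U → U → ℕ) (hA : ∀ u v, A u v = A v u) [Nonempty U]
    (hpos : ∀ v, 0 < mdeg A v) (μ : ℝ) (hμ : 0 < μ)
    (hq : ∀ f : U → ℝ, ∑ u, (mdeg A u : ℝ) * f u = 0 →
      |∑ u, ∑ v, (A u v : ℝ) * (f u * f v)| ≤ μ * ∑ u, (mdeg A u : ℝ) * f u ^ 2) :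
    IsRapidMixing A μ := by
  intro p p0 p1 t
  have hposR : ∀ v, (0 : ℝ) < mdeg A v := fun v => by exact_mod_cast hpos v
  have hmax : ∀ v, (mdeg A v : ℝ) ≤ dmaxDeg A := fun v => by
    exact_mod_cast le_ciSup (Set.finite_range (mdeg A)).bddAbove v
  have hmin : ∀ v, (dminDeg A : ℝ) ≤ mdeg A v := fun v => by
    exact_mod_cast ciInf_le (OrderBot.bddBelow _) v
  have hminpos : (0 : ℝ) < dminDeg A := by
    obtain ⟨v, hv⟩ := exists_eq_ciInf_of_finite (f := mdeg A)
    have : dminDeg A = mdeg A v := hv.symm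
    rw [this]; exact hposR v
  have htot : 0 < ∑ u, (mdeg A u : ℝ) := Finset.sum_pos (fun v _ => hposR v) univ_nonempty
  have hs1 : ∑ v, statDist A v = 1 := by
    simp only [statDist]; rw [← Finset.sum_div, div_self htot.ne']
  obtain ⟨-, hdec⟩ := decay A hA hpos μ hμ hq (p - statDist A)
    (by simp [Finset.sum_sub_distrib, hs1, p1]) t
  rw [Matrix.sub_vecMul, statDist_step A hA hpos] at hdec
  simp only [Pi.sub_apply] at hdec
  set y := Matrix.vecMul p (transition A ^ t)
  -- Orthogonality of `p - π` and `π` gives `‖p - π‖ ≤ ‖p‖` in the weighted norm.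
  have hx : ∑ v, (p v - statDist A v) ^ 2 / mdeg A v ≤ 1 / dminDeg A := by
    have e : ∀ v, (p v - statDist A v) ^ 2 / mdeg A v = p v ^ 2 / mdeg A v -
        2 / (∑ u, (mdeg A u : ℝ)) * p v + 1 / (∑ u, (mdeg A u : ℝ)) * statDist A v := by
      intro v
      have := (hposR v).ne'
      have := htot.ne'
      simp only [statDist]
      field_simp
      ring
    simp only [e, Finset.sum_add_distrib, Finset.sum_sub_distrib, ← Finset.mul_sum, hs1, p1]
    have h1 : ∑ v, p v ^ 2 / mdeg A v ≤ 1 / dminDeg A := by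
      calc _ ≤ ∑ v, p v / dminDeg A := by
            refine Finset.sum_le_sum fun v _ => ?_
            have : p v ≤ 1 := p1 ▸ Finset.single_le_sum (fun u _ => p0 u) (mem_univ v)
            exact div_le_div₀ (p0 v) (by nlinarith [p0 v]) hminpos (hmin v)
        _ = _ := by rw [← Finset.sum_div, p1]
    have h2 : 2 / (∑ u, (mdeg A u : ℝ)) = 2 * (1 / ∑ u, (mdeg A u : ℝ)) := by ring
    have h3 : 0 < 1 / (∑ u, (mdeg A u : ℝ)) := by positivity
    rw [h2]
    linarith
  have hy : ∑ v, (y v - statDist A v) ^ 2 ≤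
      dmaxDeg A * ∑ v, (y v - statDist A v) ^ 2 / mdeg A v := by
    rw [Finset.mul_sum]
    refine Finset.sum_le_sum fun v _ => ?_
    rw [mul_div_assoc', le_div_iff₀ (hposR v), mul_comm]
    exact mul_le_mul_of_nonneg_right (hmax v) (sq_nonneg _)
  rw [← Real.sqrt_sq (pow_pos hμ t).le, ← Real.sqrt_mul (by positivity)]
  refine Real.sqrt_le_sqrt (hy.trans ?_)
  calc (dmaxDeg A : ℝ) * ∑ v, (y v - statDist A v) ^ 2 / mdeg A v
      ≤ dmaxDeg A * ((μ ^ t) ^ 2 * (1 / dminDeg A)) := by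
        refine mul_le_mul_of_nonneg_left (hdec.trans ?_) (by positivity)
        exact mul_le_mul_of_nonneg_left hx (by positivity)
    _ = _ := by ring

end Mixing

/-! ### The graph of `i`-faces -/

namespace SC

variable {V : Type} [DecidableEq V] [Fintype V] {d : ℕ} (X : SC V d)

lemma mem_fc {k : ℕ} {σ : Finset V} : σ ∈ X.fc k ↔ σ ∈ X.faces ∧ σ.card = k := by
  simp [fc]

lemma deg_pos {σ : Finset V} (h : σ ∈ X.faces) : 0 < X.deg σ := by
  obtain ⟨τ, hτ, hs, hc⟩ := X.pure σ h
  exact Finset.card_pos.2 ⟨τ, by simp [mem_fc, hτ, hs, hc]⟩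

/-- The `i`-faces contained in `ρ`. -/
def below (i : ℕ) (ρ : Finset V) : Finset {σ // σ ∈ X.fc (i + 1)} :=
  univ.filter fun σ => σ.1 ⊆ ρ

lemma mem_below {i : ℕ} {ρ : Finset V} {σ : {σ // σ ∈ X.fc (i + 1)}} :
    σ ∈ X.below i ρ ↔ σ.1 ⊆ ρ := by simp [below]

lemma card_below {i : ℕ} {ρ : Finset V} (hρ : ρ ∈ X.fc (i + 2)) :
    (X.below i ρ).card = i + 2 := by
  rw [mem_fc] at hρ
  have : (X.below i ρ).image Subtype.val = ρ.powersetCard (i + 1) := by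
    ext σ
    simp only [mem_image, mem_below, Subtype.exists, mem_fc, Finset.mem_powersetCard]
    constructor
    · rintro ⟨σ, h, h', rfl⟩; exact ⟨h', h.2⟩
    · rintro ⟨h, h'⟩; exact ⟨σ, ⟨X.down_closed ρ hρ.1 σ h, h'⟩, h, rfl⟩
  rw [← Finset.card_image_of_injective _ Subtype.val_injective, this, Finset.card_powersetCard,
    hρ.2, show i + 2 = (i + 1) + 1 from rfl, Nat.choose_succ_self_right]

lemma adjG_symm (i : ℕ) (σ τ) : X.adjG i σ τ = X.adjG i τ σ := by
  simp only [adjG, Finset.union_comm]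

/-- `G_i` is an edge-disjoint union of complete graphs, one on the `i`-faces of each
`(i+1)`-face `ρ`, with multiplicity `deg ρ`. -/
lemma adjG_eq (i : ℕ) (σ τ : {σ // σ ∈ X.fc (i + 1)}) :
    (X.adjG i σ τ : ℝ) = ∑ ρ ∈ X.fc (i + 2),
      if σ ∈ X.below i ρ ∧ τ ∈ X.below i ρ ∧ σ ≠ τ then (X.deg ρ : ℝ) else 0 := by
  have hσ := ((X.mem_fc).1 σ.2).2
  have hτ := ((X.mem_fc).1 τ.2).2
  have key : ∀ ρ ∈ X.fc (i + 2), (σ ∈ X.below i ρ ∧ τ ∈ X.below i ρ ∧ σ ≠ τ) ↔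
      ρ = σ.1 ∪ τ.1 := by
    intro ρ hρ
    have hc := ((X.mem_fc).1 hρ).2
    simp only [mem_below]
    constructor
    · rintro ⟨h1, h2, h3⟩
      refine (Finset.eq_of_subset_of_card_le (Finset.union_subset h1 h2) ?_).symm
      rw [hc]
      by_contra hlt
      have e1 : σ.1 = σ.1 ∪ τ.1 :=
        Finset.eq_of_subset_of_card_le Finset.subset_union_left (by omega)
      have e2 : τ.1 = σ.1 ∪ τ.1 :=
        Finset.eq_of_subset_of_card_le Finset.subset_union_right (by omega)
      exact h3 (Subtype.ext (e1.trans e2.symm))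
    · rintro rfl
      refine ⟨Finset.subset_union_left, Finset.subset_union_right, ?_⟩
      rintro rfl
      rw [Finset.union_self] at hc
      omega
  rw [Finset.sum_congr rfl (fun ρ hρ => if_congr (key ρ hρ) rfl rfl)]
  simp [adjG, Finset.sum_ite_eq']

lemma sum_adjG (i : ℕ) (F : {σ // σ ∈ X.fc (i + 1)} → {σ // σ ∈ X.fc (i + 1)} → ℝ) :
    ∑ σ, ∑ τ, (X.adjG i σ τ : ℝ) * F σ τ = ∑ ρ ∈ X.fc (i + 2), (X.deg ρ : ℝ) *
      (∑ σ ∈ X.below i ρ, ∑ τ ∈ X.below i ρ, F σ τ - ∑ σ ∈ X.below i ρ, F σ σ) := by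
  have e : ∀ ρ, (X.deg ρ : ℝ) *
      (∑ σ ∈ X.below i ρ, ∑ τ ∈ X.below i ρ, F σ τ - ∑ σ ∈ X.below i ρ, F σ σ) =
      ∑ σ, ∑ τ, (if σ ∈ X.below i ρ ∧ τ ∈ X.below i ρ ∧ σ ≠ τ then (X.deg ρ : ℝ) else 0) *
        F σ τ := by
    intro ρ
    have h1 : ∑ σ ∈ X.below i ρ, ∑ τ ∈ X.below i ρ, F σ τ =
        ∑ σ, ∑ τ, if σ ∈ X.below i ρ ∧ τ ∈ X.below i ρ then F σ τ else 0 := by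
      simp only [ite_and]
      rw [← Finset.univ_inter (X.below i ρ), ← Finset.sum_ite_mem, Finset.univ_inter]
      refine Finset.sum_congr rfl fun σ _ => ?_
      split_ifs
      · rw [Finset.sum_ite_mem, Finset.univ_inter]
      · simp
    have h2 : ∑ σ ∈ X.below i ρ, F σ σ =
        ∑ σ, ∑ τ, if σ ∈ X.below i ρ ∧ σ = τ then F σ τ else 0 := by
      simp only [ite_and]
      rw [← Finset.univ_inter (X.below i ρ), ← Finset.sum_ite_mem, Finset.univ_inter]
      refine Finset.sum_congr rfl fun σ _ => ?_
      split_ifs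
      · rw [Finset.sum_ite_eq]; simp
      · simp
    rw [h1, h2, ← Finset.sum_sub_distrib, Finset.mul_sum]
    refine Finset.sum_congr rfl fun σ _ => ?_
    rw [← Finset.sum_sub_distrib, Finset.mul_sum]
    refine Finset.sum_congr rfl fun τ _ => ?_
    by_cases h : σ = τ
    · subst h; by_cases h' : σ ∈ X.below i ρ <;> simp [h']
    · simp [h]
  simp only [e]
  rw [Finset.sum_comm (s := X.fc (i + 2))]
  refine Finset.sum_congr rfl fun σ _ => ?_
  rw [Finset.sum_comm (s := X.fc (i + 2))]
  refine Finset.sum_congr rfl fun τ _ => ?_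
  rw [adjG_eq, Finset.sum_mul]

/-- Degree sums in `G_i`, collected over the `(i+1)`-faces. -/
lemma sum_mdeg (i : ℕ) (g : {σ // σ ∈ X.fc (i + 1)} → ℝ) :
    ∑ σ, (mdeg (X.adjG i) σ : ℝ) * g σ =
      (i + 1) * ∑ ρ ∈ X.fc (i + 2), (X.deg ρ : ℝ) * ∑ σ ∈ X.below i ρ, g σ := by
  rw [← sum_adj_left, sum_adjG X i (fun σ _ => g σ), Finset.mul_sum]
  refine Finset.sum_congr rfl fun ρ hρ => ?_
  simp only [Finset.sum_const, card_below X hρ, nsmul_eq_mul, ← Finset.mul_sum]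
  push_cast; ring

/-- Each `i`-face `σ` and each `d`-face above it have `d - i` faces of dimension `i + 1`
in between. -/
lemma sum_deg_above {i : ℕ} (hi : i < d) {σ : Finset V} (hσ : σ ∈ X.fc (i + 1)) :
    ∑ ρ ∈ (X.fc (i + 2)).filter (fun ρ => σ ⊆ ρ), X.deg ρ = (d - i) * X.deg σ := by
  have hc := ((X.mem_fc).1 hσ).2
  have hbetween : ∀ τ ∈ X.fc (d + 1), σ ⊆ τ →
      (((X.fc (i + 2)).filter (fun ρ => σ ⊆ ρ)).filter (fun ρ => ρ ⊆ τ)).card = d - i := by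
    intro τ hτ hστ
    rw [mem_fc] at hτ
    have : ((X.fc (i + 2)).filter (fun ρ => σ ⊆ ρ)).filter (fun ρ => ρ ⊆ τ) =
        (τ \ σ).image (fun x => insert x σ) := by
      ext ρ
      simp only [mem_filter, mem_image, mem_fc, mem_sdiff]
      constructor
      · rintro ⟨⟨⟨h1, h2⟩, h3⟩, h4⟩
        obtain ⟨x, hx⟩ : ∃ x, ρ \ σ = {x} := by
          rw [← Finset.card_eq_one, Finset.card_sdiff_of_subset h3, h2, hc]; omega
        have hx' : x ∈ ρ \ σ := by simp [hx]
        rw [mem_sdiff] at hx'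
        refine ⟨x, ⟨h4 hx'.1, hx'.2⟩, ?_⟩
        rw [Finset.insert_eq, ← hx, Finset.sdiff_union_of_subset h3]
      · rintro ⟨x, ⟨h1, h2⟩, rfl⟩
        have hsub : insert x σ ⊆ τ := Finset.insert_subset h1 hστ
        exact ⟨⟨⟨X.down_closed τ hτ.1 _ hsub, by rw [Finset.card_insert_of_notMem h2, hc]⟩,
          Finset.subset_insert _ _⟩, hsub⟩
    rw [this, Finset.card_image_of_injOn, Finset.card_sdiff_of_subset hστ, hτ.2, hc]
    · omega
    · intro x hx y hy hxy
      simp only [coe_sdiff, Set.mem_sdiff, mem_coe] at hx hy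
      have : x ∈ insert y σ := by
        have hxy : insert x σ = insert y σ := hxy
        rw [← hxy]; simp
      simpa [hx.2] using this
  have hdc := Finset.sum_card_bipartiteAbove_eq_sum_card_bipartiteBelow
    (s := (X.fc (i + 2)).filter (fun ρ => σ ⊆ ρ)) (t := X.fc (d + 1)) (fun ρ τ => ρ ⊆ τ)
  simp only [Finset.bipartiteAbove, Finset.bipartiteBelow] at hdc
  simp only [deg]
  rw [hdc, ← Finset.sum_filter_add_sum_filter_not (X.fc (d + 1)) (fun τ => σ ⊆ τ),
    Finset.sum_congr rfl (fun τ hτ => hbetween τ (mem_filter.1 hτ).1 (mem_filter.1 hτ).2),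
    Finset.sum_eq_zero (s := (X.fc (d + 1)).filter fun τ => ¬ σ ⊆ τ)]
  · simp [mul_comm]
  · intro τ hτ
    rw [Finset.card_eq_zero, Finset.filter_eq_empty_iff]
    exact fun ρ hρ h => (mem_filter.1 hτ).2 ((mem_filter.1 hρ).2.trans h)

lemma sum_deg_below {i : ℕ} (hi : i < d) (g : {σ // σ ∈ X.fc (i + 1)} → ℝ) :
    ∑ ρ ∈ X.fc (i + 2), (X.deg ρ : ℝ) * ∑ σ ∈ X.below i ρ, g σ =
      ((d : ℝ) - i) * ∑ σ, (X.deg σ.1 : ℝ) * g σ := by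
  have e : ∀ ρ, (X.deg ρ : ℝ) * ∑ σ ∈ X.below i ρ, g σ =
      ∑ σ, (if σ.1 ⊆ ρ then (X.deg ρ : ℝ) else 0) * g σ := by
    intro ρ
    rw [below, Finset.sum_filter, Finset.mul_sum]
    exact Finset.sum_congr rfl fun σ _ => by split_ifs <;> simp
  simp only [e]
  rw [Finset.sum_comm, Finset.mul_sum]
  refine Finset.sum_congr rfl fun σ _ => ?_
  rw [← Finset.sum_mul, ← Finset.sum_filter, ← mul_assoc]
  congr 1
  have := X.sum_deg_above hi σ.2
  rw [← Nat.cast_sum, this, Nat.cast_mul, Nat.cast_sub hi.le]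

lemma sum_mdeg' {i : ℕ} (hi : i < d) (g : {σ // σ ∈ X.fc (i + 1)} → ℝ) :
    ∑ σ, (mdeg (X.adjG i) σ : ℝ) * g σ =
      (i + 1) * ((d : ℝ) - i) * ∑ σ, (X.deg σ.1 : ℝ) * g σ := by
  rw [sum_mdeg, sum_deg_below X hi, mul_assoc]

lemma mdeg_adjG {i : ℕ} (hi : i < d) (σ : {σ // σ ∈ X.fc (i + 1)}) :
    (mdeg (X.adjG i) σ : ℝ) = (i + 1) * ((d : ℝ) - i) * X.deg σ.1 := by
  simpa using X.sum_mdeg' hi (fun τ => if τ = σ then 1 else 0)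

lemma mdeg_adjG_pos {i : ℕ} (hi : i < d) (σ : {σ // σ ∈ X.fc (i + 1)}) :
    0 < mdeg (X.adjG i) σ := by
  have h1 : (0 : ℝ) < X.deg σ.1 := by exact_mod_cast X.deg_pos ((X.mem_fc).1 σ.2).1
  have h2 : (0 : ℝ) < (d : ℝ) - i := sub_pos.2 (by exact_mod_cast hi)
  have : (0 : ℝ) < mdeg (X.adjG i) σ := by rw [mdeg_adjG X hi]; positivity
  exact_mod_cast this

/-- The degree masses of `X(i+1)` and `X(i)` are in ratio `(d - i) : (i + 2)`. -/
lemma sum_deg_ratio {i : ℕ} (hi : i < d) :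
    (i + 2) * ∑ ρ ∈ X.fc (i + 2), (X.deg ρ : ℝ) =
      ((d : ℝ) - i) * ∑ σ ∈ X.fc (i + 1), (X.deg σ : ℝ) := by
  have h := X.sum_deg_below hi (fun _ => 1)
  simp only [mul_one, Finset.sum_const, nsmul_eq_mul] at h
  rw [Finset.sum_coe_sort (X.fc (i + 1)) (fun σ => (X.deg σ : ℝ))] at h
  rw [← h, Finset.mul_sum]
  refine Finset.sum_congr rfl fun ρ hρ => ?_
  rw [card_below X hρ]; push_cast; ring

/-- The eigenvalues of a complete graph are at least `-1`, so those of the walk on `G_i` are at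
least `-1 / (i + 1)`. -/
lemma quad_lower (i : ℕ) (f : {σ // σ ∈ X.fc (i + 1)} → ℝ) :
    -(∑ σ, (mdeg (X.adjG i) σ : ℝ) * f σ ^ 2) ≤
      (i + 1) * ∑ σ, ∑ τ, (X.adjG i σ τ : ℝ) * (f σ * f τ) := by
  rw [sum_mdeg, sum_adjG X i (fun σ τ => f σ * f τ), ← mul_neg, ← Finset.sum_neg_distrib]
  refine mul_le_mul_of_nonneg_left (Finset.sum_le_sum fun ρ _ => ?_) (by positivity)
  rw [← mul_neg]
  refine mul_le_mul_of_nonneg_left ?_ (by positivity)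
  rw [← Finset.sum_mul_sum]
  simp only [← pow_two]
  linarith [sq_nonneg (∑ σ ∈ X.below i ρ, f σ)]

/-- Among the `i + 2` facets of an expanding face, both those in `W` and those outside are
present, so the face carries at least `i + 1` crossing pairs. -/
lemma cut_ge (i : ℕ) (W : Finset {σ // σ ∈ X.fc (i + 1)}) :
    (i + 1) * ∑ ρ ∈ X.psi (i + 1) (W.image Subtype.val), (X.deg ρ : ℝ) ≤
      cutEdges (X.adjG i) W := by
  have e : cutEdges (X.adjG i) W = ∑ σ, ∑ τ, (X.adjG i σ τ : ℝ) *
      ((if σ ∈ W then 1 else 0) * (if τ ∈ W then 0 else 1)) := by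
    have : ∀ σ, ∑ τ, (X.adjG i σ τ : ℝ) *
      ((if σ ∈ W then 1 else 0) * (if τ ∈ W then 0 else 1)) =
      if σ ∈ W then ∑ τ ∈ Wᶜ, (X.adjG i σ τ : ℝ) else 0 := by
      intro σ
      rw [← Finset.univ_inter Wᶜ, ← Finset.sum_ite_mem]
      split_ifs
      · refine Finset.sum_congr rfl fun τ _ => ?_
        by_cases h : τ ∈ W <;> simp [h]
      · simp
    simp only [this]
    rw [Finset.sum_ite_mem, Finset.univ_inter, cutEdges]
  rw [e, sum_adjG X i (fun σ τ => (if σ ∈ W then 1 else 0) * (if τ ∈ W then 0 else 1)), psi,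
    Finset.sum_filter, Finset.mul_sum]
  refine Finset.sum_le_sum fun ρ hρ => ?_
  have hd0 : ∑ σ ∈ X.below i ρ, ((if σ ∈ W then (1 : ℝ) else 0) * (if σ ∈ W then 0 else 1)) = 0 :=
    Finset.sum_eq_zero fun σ _ => by split_ifs <;> simp
  have ha : ∑ σ ∈ X.below i ρ, (if σ ∈ W then (1 : ℝ) else 0) =
      ((X.below i ρ).filter (· ∈ W)).card := by
    rw [Finset.card_filter]; push_cast; rfl
  have hb : ∑ σ ∈ X.below i ρ, (if σ ∈ W then (0 : ℝ) else 1) =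
      ((X.below i ρ).filter (· ∉ W)).card := by
    rw [Finset.card_filter]; push_cast
    exact Finset.sum_congr rfl fun σ _ => by split_ifs <;> simp_all
  rw [hd0, ← Finset.sum_mul_sum, ha, hb, sub_zero]
  split_ifs with h
  · rw [mul_comm]
    refine mul_le_mul_of_nonneg_left ?_ (by positivity)
    have hsum := Finset.card_filter_add_card_filter_not (s := X.below i ρ) (· ∈ W)
    rw [card_below X hρ] at hsum
    obtain ⟨⟨σ, h1, h2, h3⟩, τ, h4, h5, h6⟩ := h
    have hρf := ((X.mem_fc).1 hρ).1
    have p1 : 1 ≤ ((X.below i ρ).filter (· ∈ W)).card := by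
      obtain ⟨σ', hσ', rfl⟩ := mem_image.1 h3
      exact Finset.card_pos.2 ⟨σ', mem_filter.2 ⟨(X.mem_below).2 h1, hσ'⟩⟩
    have p2 : 1 ≤ ((X.below i ρ).filter (· ∉ W)).card := by
      have hτ : τ ∈ X.fc (i + 1) := (X.mem_fc).2 ⟨X.down_closed ρ hρf τ h4, h5⟩
      exact Finset.card_pos.2 ⟨⟨τ, hτ⟩, mem_filter.2 ⟨(X.mem_below).2 h4,
        fun h => h6 (mem_image.2 ⟨_, h, rfl⟩)⟩⟩
    have hsum' : (((X.below i ρ).filter (· ∈ W)).card : ℝ) +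
        ((X.below i ρ).filter (· ∉ W)).card = i + 2 := by exact_mod_cast hsum
    have p1' : (1 : ℝ) ≤ ((X.below i ρ).filter (· ∈ W)).card := by exact_mod_cast p1
    have p2' : (1 : ℝ) ≤ ((X.below i ρ).filter (· ∉ W)).card := by exact_mod_cast p2
    nlinarith
  · simp only [mul_zero]; positivity

/-- Colorful expansion bounds the conductance of `G_i` from below by `ε / (i + 2)`. -/
lemma conductance_bound {ε : ℝ} (hX : X.IsColorfulExpander ε) {i : ℕ} (hi : i < d)
    (W : Finset {σ // σ ∈ X.fc (i + 1)})
    (hW : 2 * vol (X.adjG i) W ≤ vol (X.adjG i) univ) :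
    ε / (i + 2) * vol (X.adjG i) W ≤ cutEdges (X.adjG i) W := by
  have hdi : (0 : ℝ) < (d : ℝ) - i := sub_pos.2 (by exact_mod_cast hi)
  set W' := W.image Subtype.val with hW'
  have hsub : W' ⊆ X.fc (i + 1) := by
    intro σ hσ
    obtain ⟨σ, -, rfl⟩ := mem_image.1 hσ
    exact σ.2
  set a := ∑ σ ∈ W', (X.deg σ : ℝ) with ha
  set b := ∑ σ ∈ X.fc (i + 1), (X.deg σ : ℝ) with hb
  set c := ∑ ρ ∈ X.fc (i + 2), (X.deg ρ : ℝ) with hc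
  set p := ∑ ρ ∈ X.psi (i + 1) W', (X.deg ρ : ℝ) with hp
  have hvolW : vol (X.adjG i) W = (i + 1) * ((d : ℝ) - i) * a := by
    simp only [vol, mdeg_adjG X hi]
    rw [← Finset.mul_sum, ha, hW', Finset.sum_image (fun x _ y _ h => Subtype.ext h)]
  have hvolU : vol (X.adjG i) univ = (i + 1) * ((d : ℝ) - i) * b := by
    simp only [vol, mdeg_adjG X hi]
    rw [← Finset.mul_sum, hb, Finset.sum_coe_sort (X.fc (i + 1)) (fun σ => (X.deg σ : ℝ))]
  have hnW : X.norm (i + 1) W' = a / b := by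
    rw [norm, Finset.filter_mem_eq_inter, Finset.inter_eq_right.2 hsub]
  have hnp : X.norm (i + 2) (X.psi (i + 1) W') = p / c := by
    rw [norm, Finset.filter_mem_eq_inter, Finset.inter_eq_right.2
      (show X.psi (i + 1) W' ⊆ X.fc (i + 2) from Finset.filter_subset _ _)]
  have hcut := X.cut_ge i W
  have hratio : (i + 2) * c = ((d : ℝ) - i) * b := X.sum_deg_ratio hi
  have ha0 : 0 ≤ a := Finset.sum_nonneg fun _ _ => by positivity
  have hp0 : 0 ≤ p := Finset.sum_nonneg fun _ _ => by positivity
  have hi2 : (0 : ℝ) < i + 2 := by positivity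
  refine le_trans ?_ hcut
  rw [hvolW]
  rcases ha0.eq_or_lt with h0 | h0
  · rw [← h0]; simp only [mul_zero]; positivity
  have hab : 2 * a ≤ b := by
    rw [hvolW, hvolU] at hW
    have : (0 : ℝ) < (i + 1) * ((d : ℝ) - i) := by positivity
    nlinarith
  have hb0 : 0 < b := by linarith
  have hc0 : 0 < c := by
    have : 0 < (i + 2) * c := by rw [hratio]; positivity
    exact pos_of_mul_pos_right this hi2.le
  have h := hX i hi W' hsub (by rw [hnW]; positivity) (by rw [hnW, div_le_iff₀ hb0]; linarith)
  rw [hnW, hnp, le_div_iff₀ (by positivity), le_div_iff₀ hc0] at h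
  have h2 : ε * ((d : ℝ) - i) * a = (i + 2) * (ε * (a / b) * c) := by
    rw [show (i + 2) * (ε * (a / b) * c) = ε * (a / b) * ((i + 2) * c) by ring, hratio]
    field_simp
  have h3 : ε / (i + 2) * ((d : ℝ) - i) * a ≤ p := by
    rw [div_mul_eq_mul_div, div_mul_eq_mul_div, div_le_iff₀ hi2, h2]
    nlinarith
  calc _ = (i + 1) * (ε / (i + 2) * ((d : ℝ) - i) * a) := by ring
    _ ≤ _ := mul_le_mul_of_nonneg_left h3 (by positivity)

/-- A conductance bound is at most `1`: test it on the lighter of two singletons. -/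
lemma eps_le {ε : ℝ} (hX : X.IsColorfulExpander ε) {i : ℕ} (hi : i < d) : ε ≤ i + 2 := by
  obtain ⟨τ, hτ, -, hτc⟩ := X.pure ∅ X.empty_mem
  obtain ⟨ρ, hρτ, hρc⟩ := Finset.exists_subset_card_eq (show i + 2 ≤ τ.card by omega)
  have hρ : ρ ∈ X.fc (i + 2) := (X.mem_fc).2 ⟨X.down_closed τ hτ ρ hρτ, hρc⟩
  obtain ⟨σ, -, σ', -, hne⟩ :=
    Finset.one_lt_card.1 (show 1 < (X.below i ρ).card by rw [card_below X hρ]; omega)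
  wlog hle : mdeg (X.adjG i) σ ≤ mdeg (X.adjG i) σ' generalizing σ σ'
  · exact this σ' σ hne.symm (by omega)
  have hv : vol (X.adjG i) {σ} = mdeg (X.adjG i) σ := by simp [vol]
  have hle' : (mdeg (X.adjG i) σ : ℝ) ≤ mdeg (X.adjG i) σ' := by exact_mod_cast hle
  have h2 : vol (X.adjG i) {σ, σ'} ≤ vol (X.adjG i) univ :=
    Finset.sum_le_sum_of_subset_of_nonneg (subset_univ _) fun _ _ _ => by positivity
  have h3 : vol (X.adjG i) {σ, σ'} = mdeg (X.adjG i) σ + mdeg (X.adjG i) σ' := by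
    simp [vol, Finset.sum_pair hne]
  have h := X.conductance_bound hX hi {σ} (by rw [hv]; linarith)
  have hcut : cutEdges (X.adjG i) {σ} ≤ mdeg (X.adjG i) σ := by
    rw [cutEdges, Finset.sum_singleton, mdeg, Nat.cast_sum]
    exact Finset.sum_le_sum_of_subset_of_nonneg (subset_univ _) fun _ _ _ => by positivity
  have hpos : (0 : ℝ) < mdeg (X.adjG i) σ := by exact_mod_cast X.mdeg_adjG_pos hi σ
  rw [hv] at h
  have : ε / (i + 2) ≤ 1 := by
    by_contra hcon
    push Not at hcon
    nlinarith
  rwa [div_le_one (by positivity)] at this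

lemma nonempty_faces {i : ℕ} (hi : i < d) : Nonempty {σ // σ ∈ X.fc (i + 1)} := by
  obtain ⟨τ, hτ, -, hτc⟩ := X.pure ∅ X.empty_mem
  obtain ⟨σ, hστ, hσc⟩ := Finset.exists_subset_card_eq (show i + 1 ≤ τ.card by omega)
  exact ⟨σ, (X.mem_fc).2 ⟨X.down_closed τ hτ σ hστ, hσc⟩⟩

/-- The upper spectral bound on `G_i`. -/
lemma quad_upper {ε : ℝ} (hε : 0 < ε) (hX : X.IsColorfulExpander ε) {i : ℕ} (hi : i < d)
    (f : {σ // σ ∈ X.fc (i + 1)} → ℝ) (hf : ∑ σ, (mdeg (X.adjG i) σ : ℝ) * f σ = 0) :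
    ∑ σ, ∑ τ, (X.adjG i σ τ : ℝ) * (f σ * f τ) ≤
      (1 - (ε / (i + 2)) ^ 2 / 2) * ∑ σ, (mdeg (X.adjG i) σ : ℝ) * f σ ^ 2 := by
  have := X.nonempty_faces hi
  exact cheeger (X.adjG i) (X.adjG_symm i) (ε / (i + 2)) (by positivity)
    (fun W hW => X.conductance_bound hX hi W hW) f hf

end SC

/-! ### Lazy walks -/

section Lazy

variable {U : Type} [Fintype U] [DecidableEq U]

lemma mdeg_lazy (A : U → U → ℕ) (u : U) : mdeg (lazy A) u = 2 * mdeg A u := by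
  simp [mdeg, lazy, Finset.sum_add_distrib, two_mul]

lemma quad_lazy (A : U → U → ℕ) (f : U → ℝ) :
    ∑ u, ∑ v, (lazy A u v : ℝ) * (f u * f v) =
      ∑ u, ∑ v, (A u v : ℝ) * (f u * f v) + ∑ u, (mdeg A u : ℝ) * f u ^ 2 := by
  rw [← Finset.sum_add_distrib]
  refine Finset.sum_congr rfl fun u _ => ?_
  simp [lazy, add_mul, Finset.sum_add_distrib, pow_two]

end Lazy

/-- **Colorful expansion implies rapid mixing.** If `X` is a pure `d`-dimensional
`ε`-colorful expander with `d > 1`, then for every `0 ≤ i < d` the high order random walk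
on dimension `i` of `X` (taken lazy for `i = 0`) is `μ`-rapidly mixing for
`μ = 1 − ε²/(2(d+1)²)`. -/
theorem statement9 {V : Type} [DecidableEq V] [Fintype V] {d : ℕ} (X : SC V d)
    (hd : 1 < d) (ε : ℝ) (hε : 0 < ε) (hX : X.IsColorfulExpander ε) :
    IsRapidMixing (lazy (X.adjG 0)) (1 - ε ^ 2 / (2 * ((d : ℝ) + 1) ^ 2)) ∧
      ∀ i : ℕ, 0 < i → i < d →
        IsRapidMixing (X.adjG i) (1 - ε ^ 2 / (2 * ((d : ℝ) + 1) ^ 2)) := by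
  set μ : ℝ := 1 - ε ^ 2 / (2 * ((d : ℝ) + 1) ^ 2) with hμ
  have hd' : (2 : ℝ) ≤ d := by exact_mod_cast hd
  have hμhalf : 1 / 2 ≤ μ := by
    have h1 : ε ≤ d + 1 := by
      have := X.eps_le hX (show d - 1 < d by omega)
      rw [Nat.cast_sub (by omega)] at this
      push_cast at this
      linarith
    have h2 : ε ^ 2 ≤ ((d : ℝ) + 1) ^ 2 := pow_le_pow_left₀ hε.le h1 2
    have h3 : ε ^ 2 / (2 * ((d : ℝ) + 1) ^ 2) ≤ 1 / 2 := by
      rw [div_le_iff₀ (by positivity)]; linarith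
    linarith
  refine ⟨?_, fun i hi0 hi => ?_⟩
  · have h0 : 0 < d := by omega
    have := X.nonempty_faces h0
    refine rapidMixing_of_quad _ ?_ ?_ μ (by linarith) ?_
    · intro σ τ
      by_cases h : σ = τ
      · rw [h]
      · simp [lazy, h, Ne.symm h, X.adjG_symm 0 σ τ]
    · intro σ
      rw [mdeg_lazy]
      have := X.mdeg_adjG_pos h0 σ
      omega
    · intro f hf
      have hf' : ∑ σ, (mdeg (X.adjG 0) σ : ℝ) * f σ = 0 := by
        simp only [mdeg_lazy, Nat.cast_mul, mul_assoc, ← Finset.mul_sum] at hf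
        simpa using hf
      have hu := X.quad_upper hε hX h0 f hf'
      have hl : 0 ≤ ∑ u, ∑ v, (X.adjG 0 u v : ℝ) * (f u + f v) ^ 2 :=
        Finset.sum_nonneg fun _ _ => Finset.sum_nonneg fun _ _ => by positivity
      rw [sum_adj_add_sq _ (X.adjG_symm 0)] at hl
      rw [quad_lazy]
      simp only [mdeg_lazy, Nat.cast_mul, mul_assoc, ← Finset.mul_sum]
      set N := ∑ σ, (mdeg (X.adjG 0) σ : ℝ) * f σ ^ 2
      have hN : 0 ≤ N := Finset.sum_nonneg fun _ _ => by positivity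
      -- Laziness halves the gap `ε ^ 2 / 8`; the hypothesis `d ≥ 2` absorbs this loss.
      have hgap : ε ^ 2 / (2 * ((d : ℝ) + 1) ^ 2) ≤ ε ^ 2 / 16 :=
        div_le_div_of_nonneg_left (by positivity) (by norm_num) (by nlinarith)
      have hgap' := mul_le_mul_of_nonneg_right hgap hN
      push_cast at hu ⊢
      rw [abs_le]
      constructor
      · have : 0 ≤ μ * (2 * N) := by positivity
        linarith
      · rw [hμ]
        linarith
  · have := X.nonempty_faces hi
    refine rapidMixing_of_quad _ (X.adjG_symm i) (X.mdeg_adjG_pos hi) μ (by linarith) ?_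
    intro f hf
    have hu := X.quad_upper hε hX hi f hf
    have hl := X.quad_lower i f
    set N := ∑ σ, (mdeg (X.adjG i) σ : ℝ) * f σ ^ 2
    set Q := ∑ σ, ∑ τ, (X.adjG i σ τ : ℝ) * (f σ * f τ)
    have hN : 0 ≤ N := Finset.sum_nonneg fun _ _ => by positivity
    have hi1 : (1 : ℝ) ≤ i := by exact_mod_cast hi0
    have hid : (i : ℝ) + 1 ≤ d := by exact_mod_cast hi
    have hgap : ε ^ 2 / (2 * ((d : ℝ) + 1) ^ 2) ≤ (ε / (i + 2)) ^ 2 / 2 := by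
      rw [div_pow, div_div]
      refine div_le_div_of_nonneg_left (by positivity) (by positivity) ?_
      nlinarith
    have hgap' := mul_le_mul_of_nonneg_right hgap hN
    have hμN := mul_le_mul_of_nonneg_right hμhalf hN
    rw [abs_le]
    constructor
    · rcases le_total 0 Q with hQ | hQ
      · linarith
      · nlinarith
    · rw [hμ]
      linarith
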